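/- Let v* ∈ ℝ^n be the vector with positive entries defined by v*_i = sqrt((σ* Ψ^{-1} σ* 1)_i / (1ᵀ σ* Ψ^{-1} σ* 1)) (well defined since every entry of σ* Ψ^{-1} σ* 1 is positive). Then a unit vector b ∈ ℝ^n maximizes the smallest eigenvalue of W(b) over the unit sphere if and only if |b_i| = v*_i for all i, i.e., if and only if b = σ v* for some n×n diagonal signature matrix σ; in particular there are exactly 2^n maximizers. -/

import Mathlib

open Matrix BigOperators

/-- The Cauchy matrix with entries `1/(λᵢ + λⱼ)`. -/
noncomputable def cauchyPsi (n : ℕ) (lam : Fin n → ℝ) : Matrix (Fin n) (Fin n) ℝ :=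
  Matrix.of fun i j => 1 / (lam i + lam j)

/-- `W(b) = diag(b) Ψ diag(b)`. -/
noncomputable def cauchyW (n : ℕ) (lam : Fin n → ℝ) (b : Fin n → ℝ) :
    Matrix (Fin n) (Fin n) ℝ :=
  Matrix.diagonal b * cauchyPsi n lam * Matrix.diagonal b

/-- The diagonal signature matrix `σ*` with `i`-th diagonal entry `(-1)^i`. -/
noncomputable def sigmaStar (n : ℕ) : Matrix (Fin n) (Fin n) ℝ :=
  Matrix.diagonal fun i : Fin n => (-1 : ℝ) ^ (i : ℕ)

/-- The optimal actuator profile `v*`, `v*ᵢ = sqrt((σ* Ψ⁻¹ σ* 1)ᵢ / (1ᵀ σ* Ψ⁻¹ σ* 1))`. -/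
noncomputable def vStar (n : ℕ) (lam : Fin n → ℝ) : Fin n → ℝ := fun i =>
  Real.sqrt
    ((sigmaStar n * (cauchyPsi n lam)⁻¹ * sigmaStar n).mulVec
        (fun _ : Fin n => (1 : ℝ)) i /
      ((fun _ : Fin n => (1 : ℝ)) ⬝ᵥ
        (sigmaStar n * (cauchyPsi n lam)⁻¹ * sigmaStar n).mulVec
          fun _ : Fin n => (1 : ℝ)))


theorem cauchy_quad_nonneg (n : ℕ) (lam : Fin n → ℝ) (hpos : ∀ i, 0 < lam i) (z : Fin n → ℝ) :
    0 ≤ ∑ i, ∑ j, z i * z j * (1 / (lam i + lam j)) := by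
  have h1 : ∀ i j, (1 / (lam i + lam j)) =
      ∫ x : ℝ in Set.Ioi 0, Real.exp (-(lam i + lam j) * x) := by
    intro i j
    rw [integral_exp_mul_Ioi (by linarith [hpos i, hpos j])]
    rw [mul_zero, Real.exp_zero, neg_div_neg_eq]
  have hint : ∀ i j, MeasureTheory.IntegrableOn
      (fun x : ℝ => z i * z j * Real.exp (-(lam i + lam j) * x)) (Set.Ioi 0) := by
    intro i j
    exact (integrableOn_exp_mul_Ioi (by linarith [hpos i, hpos j]) 0).const_mul _
  have h2 : ∑ i, ∑ j, z i * z j * (1 / (lam i + lam j)) =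
      ∫ x : ℝ in Set.Ioi 0, (∑ i, z i * Real.exp (-lam i * x)) ^ 2 := by
    have : ∀ x : ℝ, (∑ i, z i * Real.exp (-lam i * x)) ^ 2 =
        ∑ i, ∑ j, z i * z j * Real.exp (-(lam i + lam j) * x) := by
      intro x
      rw [sq, Finset.sum_mul_sum]
      refine Finset.sum_congr rfl fun i _ => Finset.sum_congr rfl fun j _ => ?_
      rw [show -(lam i + lam j) * x = -lam i * x + -lam j * x by ring, Real.exp_add]
      ring
    simp_rw [this]
    rw [MeasureTheory.integral_finsetSum _
      (fun i _ => MeasureTheory.integrable_finsetSum _ fun j _ => hint i j)]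
    refine Finset.sum_congr rfl fun i _ => ?_
    rw [MeasureTheory.integral_finsetSum _ (fun j _ => hint i j)]
    refine Finset.sum_congr rfl fun j _ => ?_
    rw [MeasureTheory.integral_const_mul, h1]
  rw [h2]
  exact MeasureTheory.integral_nonneg fun x => sq_nonneg _

noncomputable def cauchyC (n : ℕ) (lam : Fin n → ℝ) (i : Fin n) : ℝ :=
  (∏ l, (lam i + lam l)) / ∏ l ∈ Finset.univ.erase i, (lam i - lam l)

theorem cauchyC_sign (n : ℕ) (lam : Fin n → ℝ)
    (hpos : ∀ i, 0 < lam i) (hmono : StrictMono lam) (i : Fin n) :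
    0 < (-1 : ℝ) ^ (n - 1) * ((-1 : ℝ) ^ (i : ℕ) * cauchyC n lam i) := by
  have h1 : ∏ l ∈ Finset.univ.erase i, (lam i - lam l) =
      (-1 : ℝ) ^ (n - 1 - (i : ℕ)) * ∏ l ∈ Finset.univ.erase i, |lam i - lam l| := by
    have : ∀ l ∈ Finset.univ.erase i, lam i - lam l =
        (if i < l then (-1 : ℝ) else 1) * |lam i - lam l| := by
      intro l hl
      split_ifs with h
      · rw [abs_of_neg (by linarith [hmono h])]; ring
      · have : l < i := lt_of_le_of_ne (not_lt.mp h) (Finset.ne_of_mem_erase hl)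
        rw [abs_of_pos (by linarith [hmono this])]; ring
    rw [Finset.prod_congr rfl this, Finset.prod_mul_distrib, Finset.prod_ite]
    congr 1
    have h3 : (Finset.univ.erase i).filter (fun l => i < l) = Finset.Ioi i := by
      ext l
      simp only [Finset.mem_filter, Finset.mem_erase, Finset.mem_univ, and_true, Finset.mem_Ioi]
      exact ⟨fun h => h.2, fun h => ⟨h.ne', h⟩⟩
    rw [h3]
    simp
  have h2 : 0 < ∏ l ∈ Finset.univ.erase i, |lam i - lam l| := by
    refine Finset.prod_pos fun l hl => abs_pos.mpr (sub_ne_zero.mpr fun h => ?_)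
    exact Finset.ne_of_mem_erase hl (hmono.injective h).symm
  have h3 : 0 < ∏ l, (lam i + lam l) := Finset.prod_pos fun l _ => by linarith [hpos i, hpos l]
  rw [cauchyC, h1]
  have h4 : (-1 : ℝ) ^ (n - 1) = (-1 : ℝ) ^ (n - 1 - (i : ℕ)) * (-1 : ℝ) ^ (i : ℕ) := by
    rw [← pow_add]; congr 1; have := i.2; omega
  rw [h4]
  have e1 : (-1 : ℝ) ^ (i : ℕ) * (-1 : ℝ) ^ (i : ℕ) = 1 := by
    rw [← mul_pow]; simp
  have hne : (-1 : ℝ) ^ (n - 1 - (i : ℕ)) ≠ 0 := pow_ne_zero _ (by norm_num)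
  have : (-1 : ℝ) ^ (n - 1 - (i : ℕ)) * (-1 : ℝ) ^ (i : ℕ) * ((-1 : ℝ) ^ (i : ℕ) *
      ((∏ l, (lam i + lam l)) / ((-1 : ℝ) ^ (n - 1 - (i : ℕ)) *
        ∏ l ∈ Finset.univ.erase i, |lam i - lam l|))) =
      ((-1 : ℝ) ^ (i : ℕ) * (-1 : ℝ) ^ (i : ℕ)) *
      ((∏ l, (lam i + lam l)) / ∏ l ∈ Finset.univ.erase i, |lam i - lam l|) := by
    field_simp
  rw [this, e1, one_mul]
  positivity

theorem cauchyC_sum (n : ℕ) (lam : Fin n → ℝ)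
    (hpos : ∀ i, 0 < lam i) (hmono : StrictMono lam) (i k : Fin n) :
    ∑ j, (1 / (lam i + lam j)) * (cauchyC n lam j * cauchyC n lam k / (lam j + lam k)) =
      if i = k then 1 else 0 := by
  have hs : ∀ a b, lam a + lam b ≠ 0 := fun a b => by linarith [hpos a, hpos b]
  have hd : ∀ j, ∏ l ∈ Finset.univ.erase j, (lam j - lam l) ≠ 0 := fun j =>
    Finset.prod_ne_zero_iff.mpr fun l hl => sub_ne_zero.mpr fun h =>
      Finset.ne_of_mem_erase hl (hmono.injective h).symm
  have hP : ∀ a, ∏ l, (lam a + lam l) ≠ 0 := fun a =>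
    Finset.prod_ne_zero_iff.mpr fun l _ => hs a l
  set P : Polynomial ℝ := Lagrange.nodal (Finset.univ.erase k) (fun l => -lam l) with hPdef
  have hdeg : P.degree < (Finset.univ : Finset (Fin n)).card := by
    rw [hPdef, Lagrange.degree_nodal]
    exact_mod_cast Finset.card_erase_lt_of_mem (Finset.mem_univ k)
  have key := congrArg (Polynomial.eval (-lam i))
    (Lagrange.eq_interpolate (v := lam) hmono.injective.injOn hdeg)
  rw [Lagrange.interpolate_apply, Polynomial.eval_finsetSum] at key
  have hpk : ∀ a, (lam a + lam k) * ∏ l ∈ Finset.univ.erase k, (lam a + lam l) =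
      ∏ l, (lam a + lam l) := fun a =>
    Finset.mul_prod_erase Finset.univ (fun l => lam a + lam l) (Finset.mem_univ k)
  have hterm : ∀ j, Polynomial.eval (-lam i)
      (Polynomial.C (P.eval (lam j)) * Lagrange.basis Finset.univ lam j) =
      cauchyC n lam j / (lam j + lam k) *
        ((-1) ^ (n - 1) * (∏ l, (lam i + lam l)) / (lam i + lam j)) := by
    intro j
    rw [Polynomial.eval_mul, Polynomial.eval_C, hPdef, Lagrange.eval_nodal, Lagrange.basis,
      Polynomial.eval_prod]
    have e1 : ∏ l ∈ Finset.univ.erase j, Polynomial.eval (-lam i)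
        (Lagrange.basisDivisor (lam j) (lam l)) =
        (-1) ^ (n - 1) * (∏ l ∈ Finset.univ.erase j, (lam i + lam l)) /
          ∏ l ∈ Finset.univ.erase j, (lam j - lam l) := by
      have : ((-1 : ℝ)) ^ (n - 1) = ∏ l ∈ Finset.univ.erase j, (-1 : ℝ) := by simp
      rw [this, ← Finset.prod_mul_distrib, ← Finset.prod_div_distrib]
      refine Finset.prod_congr rfl fun l hl => ?_
      simp [Lagrange.basisDivisor]
      ring
    rw [e1]
    simp only [sub_neg_eq_add]
    have e2 := Finset.mul_prod_erase Finset.univ (fun l => lam i + lam l) (Finset.mem_univ j)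
    have e3 := hpk j
    rw [cauchyC, ← e2, ← e3]
    have := hd j
    have := hs j k
    have := hs i j
    field_simp
  simp_rw [hterm] at key
  rw [hPdef, Lagrange.eval_nodal] at key
  simp only [sub_neg_eq_add] at key
  have hsq : ((-1 : ℝ)) ^ (n - 1) * (-1) ^ (n - 1) = 1 := by rw [← mul_pow]; simp
  have hfac : ∑ j, (1 / (lam i + lam j)) * (cauchyC n lam j * cauchyC n lam k / (lam j + lam k)) =
      cauchyC n lam k * (-1) ^ (n - 1) / (∏ l, (lam i + lam l)) *
      ∑ j, cauchyC n lam j / (lam j + lam k) *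
        ((-1) ^ (n - 1) * (∏ l, (lam i + lam l)) / (lam i + lam j)) := by
    rw [Finset.mul_sum]
    refine Finset.sum_congr rfl fun j _ => ?_
    have := hs j k
    have := hs i j
    have := hP i
    field_simp
    linear_combination (-(cauchyC n lam k * cauchyC n lam j)) * hsq
  rw [hfac, ← key]
  split_ifs with h
  · subst h
    have e1 : ∏ l ∈ Finset.univ.erase i, (-lam i + lam l) =
        (-1) ^ (n - 1) * ∏ l ∈ Finset.univ.erase i, (lam i - lam l) := by
      have : ((-1 : ℝ)) ^ (n - 1) = ∏ l ∈ Finset.univ.erase i, (-1 : ℝ) := by simp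
      rw [this, ← Finset.prod_mul_distrib]
      refine Finset.prod_congr rfl fun l hl => ?_
      ring
    rw [e1, cauchyC]
    have := hP i
    have := hd i
    field_simp
    linear_combination hsq
  · rw [Finset.prod_eq_zero (Finset.mem_erase.mpr ⟨h, Finset.mem_univ i⟩) (by ring), mul_zero]

theorem cauchyPsi_inv (n : ℕ) (lam : Fin n → ℝ)
    (hpos : ∀ i, 0 < lam i) (hmono : StrictMono lam) :
    cauchyPsi n lam * (Matrix.of fun i j : Fin n =>
      cauchyC n lam i * cauchyC n lam j / (lam i + lam j)) = 1 := by
  ext i k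
  rw [Matrix.mul_apply, Matrix.one_apply]
  exact cauchyC_sum n lam hpos hmono i k

theorem sInf_spec_mem (n : ℕ) (hn : 0 < n) (A : Matrix (Fin n) (Fin n) ℝ) (hA : A.IsHermitian) :
    sInf (spectrum ℝ A) ∈ spectrum ℝ A := by
  have : Nonempty (Fin n) := ⟨⟨0, hn⟩⟩
  have := hA.spectrum_real_eq_range_eigenvalues
  rw [this]
  exact (Set.range_nonempty _).csInf_mem (Set.finite_range _)

theorem sInf_spec_le (n : ℕ) (A : Matrix (Fin n) (Fin n) ℝ) (hA : A.IsHermitian)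
    (x : Fin n → ℝ) : sInf (spectrum ℝ A) * ∑ i, x i ^ 2 ≤ x ⬝ᵥ (A *ᵥ x) := by
  set m := sInf (spectrum ℝ A) with hm
  have hH : (A - m • (1 : Matrix (Fin n) (Fin n) ℝ)).IsHermitian := by
    refine hA.sub ?_
    simp [Matrix.IsHermitian, Matrix.conjTranspose_smul]
  have hps : (A - m • (1 : Matrix (Fin n) (Fin n) ℝ)).PosSemidef := by
    rw [hH.posSemidef_iff_eigenvalues_nonneg]
    intro i
    have h1 := hH.eigenvalues_mem_spectrum_real i
    have h2 : hH.eigenvalues i + m ∈ spectrum ℝ A := by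
      rw [spectrum.mem_iff] at h1 ⊢
      convert h1 using 2
      rw [Algebra.algebraMap_eq_smul_one, Algebra.algebraMap_eq_smul_one, add_smul]
      abel
    have hb : BddBelow (spectrum ℝ A) := by
      rw [hA.spectrum_real_eq_range_eigenvalues]
      exact (Set.finite_range _).bddBelow
    have := csInf_le hb h2
    show 0 ≤ hH.eigenvalues i
    linarith
  have := hps.dotProduct_mulVec_nonneg x
  rw [Matrix.sub_mulVec, Matrix.smul_mulVec, Matrix.one_mulVec, dotProduct_sub,
    dotProduct_smul] at this
  simp only [star_trivial, smul_eq_mul] at this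
  have e : x ⬝ᵥ x = ∑ i, x i ^ 2 := by simp [dotProduct, sq]
  rw [e] at this
  linarith

theorem le_sInf_spec (n : ℕ) (hn : 0 < n) (A : Matrix (Fin n) (Fin n) ℝ) (hA : A.IsHermitian)
    (t : ℝ) (h : ∀ x : Fin n → ℝ, t * ∑ i, x i ^ 2 ≤ x ⬝ᵥ (A *ᵥ x)) :
    t ≤ sInf (spectrum ℝ A) := by
  have hmem := sInf_spec_mem n hn A hA
  rw [hA.spectrum_real_eq_range_eigenvalues] at hmem ⊢
  obtain ⟨i, hi⟩ := hmem
  rw [← hi]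
  set v : Fin n → ℝ := (hA.eigenvectorBasis i).ofLp with hv
  have h1 : A *ᵥ v = hA.eigenvalues i • v := hA.mulVec_eigenvectorBasis i
  have h2 : ∑ j, v j ^ 2 = 1 := by
    have := hA.eigenvectorBasis.orthonormal.1 i
    rw [EuclideanSpace.norm_eq, Real.sqrt_eq_one] at this
    simpa using this
  have h3 := h v
  rw [h1, dotProduct_smul, h2] at h3
  have e : v ⬝ᵥ v = ∑ i, v i ^ 2 := by simp [dotProduct, sq]
  rw [e, h2] at h3
  simpa using h3

noncomputable def cM (n : ℕ) (lam : Fin n → ℝ) (i j : Fin n) : ℝ :=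
  ((-1 : ℝ) ^ (i : ℕ) * cauchyC n lam i) * ((-1 : ℝ) ^ (j : ℕ) * cauchyC n lam j) / (lam i + lam j)

noncomputable def cU (n : ℕ) (lam : Fin n → ℝ) (i : Fin n) : ℝ := ∑ j, cM n lam i j

theorem cM_pos (n : ℕ) (lam : Fin n → ℝ)
    (hpos : ∀ i, 0 < lam i) (hmono : StrictMono lam) (i j : Fin n) : 0 < cM n lam i j := by
  have h1 := mul_pos (cauchyC_sign n lam hpos hmono i) (cauchyC_sign n lam hpos hmono j)
  have hsq : ((-1 : ℝ)) ^ (n - 1) * (-1) ^ (n - 1) = 1 := by rw [← mul_pow]; simp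
  refine div_pos ?_ (by linarith [hpos i, hpos j])
  calc (0 : ℝ) < _ := h1
    _ = (((-1 : ℝ)) ^ (n - 1) * (-1) ^ (n - 1)) * (((-1 : ℝ) ^ (i : ℕ) * cauchyC n lam i) *
        ((-1 : ℝ) ^ (j : ℕ) * cauchyC n lam j)) := by ring
    _ = _ := by rw [hsq, one_mul]

theorem cM_symm (n : ℕ) (lam : Fin n → ℝ) (i j : Fin n) : cM n lam i j = cM n lam j i := by
  unfold cM; rw [add_comm (lam i), mul_comm]

theorem cU_pos (n : ℕ) (lam : Fin n → ℝ)
    (hpos : ∀ i, 0 < lam i) (hmono : StrictMono lam) (i : Fin n) : 0 < cU n lam i :=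
  Finset.sum_pos (fun j _ => cM_pos n lam hpos hmono i j) ⟨i, Finset.mem_univ i⟩

theorem vStar_eq (n : ℕ) (lam : Fin n → ℝ)
    (hpos : ∀ i, 0 < lam i) (hmono : StrictMono lam) (i : Fin n) :
    vStar n lam i = Real.sqrt (cU n lam i / ∑ j, cU n lam j) := by
  have h : (sigmaStar n * (cauchyPsi n lam)⁻¹ * sigmaStar n).mulVec (fun _ : Fin n => (1 : ℝ)) =
      cU n lam := by
    rw [Matrix.inv_eq_right_inv (cauchyPsi_inv n lam hpos hmono)]
    ext k
    unfold sigmaStar cU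
    rw [Matrix.mulVec, dotProduct]
    refine Finset.sum_congr rfl fun j _ => ?_
    rw [Matrix.mul_diagonal, Matrix.diagonal_mul, Matrix.of_apply, cM]
    ring
  unfold vStar
  rw [h]
  simp [dotProduct]

theorem cauchyW_herm (n : ℕ) (lam b : Fin n → ℝ) : (cauchyW n lam b).IsHermitian := by
  ext i j
  simp only [cauchyW, cauchyPsi, Matrix.conjTranspose_apply, Matrix.mul_diagonal,
    Matrix.diagonal_mul, Matrix.of_apply, star_trivial]
  rw [add_comm (lam j)]; ring

theorem cauchyW_quad (n : ℕ) (lam b x : Fin n → ℝ) : x ⬝ᵥ (cauchyW n lam b *ᵥ x) =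
    ∑ i, ∑ j, (b i * x i) * (b j * x j) * (1 / (lam i + lam j)) := by
  simp only [dotProduct, Matrix.mulVec, cauchyW, cauchyPsi, Matrix.mul_diagonal,
    Matrix.diagonal_mul, Matrix.of_apply, Finset.mul_sum]
  refine Finset.sum_congr rfl fun i _ => Finset.sum_congr rfl fun j _ => ?_
  ring

theorem sgn_mul_self (k : ℕ) : (-1 : ℝ) ^ k * (-1 : ℝ) ^ k = 1 := by rw [← mul_pow]; simp

/-- Applying the Cauchy matrix to its inverse times `w`, for `w` twisted by signs. -/
theorem cauchy_apply (n : ℕ) (lam : Fin n → ℝ)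
    (hpos : ∀ i, 0 < lam i) (hmono : StrictMono lam) (w : Fin n → ℝ) (i : Fin n) :
    ∑ j, (1 / (lam i + lam j)) * ((-1 : ℝ) ^ (j : ℕ) * ∑ k, cM n lam j k * w k) =
      (-1 : ℝ) ^ (i : ℕ) * w i := by
  have : ∀ j, (1 / (lam i + lam j)) * ((-1 : ℝ) ^ (j : ℕ) * ∑ k, cM n lam j k * w k) =
      ∑ k : Fin n, ((-1 : ℝ) ^ (k : ℕ) * w k) * ((1 / (lam i + lam j)) *
        (cauchyC n lam j * cauchyC n lam k / (lam j + lam k))) := by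
    intro j
    rw [Finset.mul_sum, Finset.mul_sum]
    refine Finset.sum_congr rfl fun k _ => ?_
    unfold cM
    linear_combination ((-1 : ℝ) ^ (k : ℕ) * w k) * ((1 / (lam i + lam j)) *
        (cauchyC n lam j * cauchyC n lam k / (lam j + lam k))) * sgn_mul_self j
  simp_rw [this]
  rw [Finset.sum_comm]
  simp_rw [← Finset.mul_sum, cauchyC_sum n lam hpos hmono]
  simp

theorem upper_bound (n : ℕ) (hn : 0 < n) (lam : Fin n → ℝ)
    (hpos : ∀ i, 0 < lam i) (hmono : StrictMono lam) (b : Fin n → ℝ) (hb : ∑ i, b i ^ 2 = 1) :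
    sInf (spectrum ℝ (cauchyW n lam b)) ≤ 1 / ∑ j, cU n lam j ∧
    (1 / ∑ j, cU n lam j ≤ sInf (spectrum ℝ (cauchyW n lam b)) →
      ∀ i, b i ^ 2 = cU n lam i / ∑ j, cU n lam j) := by
  set s := ∑ j, cU n lam j with hs
  have hspos : 0 < s := Finset.sum_pos (fun j _ => cU_pos n lam hpos hmono j)
    ⟨⟨0, hn⟩, Finset.mem_univ _⟩
  have hinv : 0 < 1 / s := by positivity
  have hq := sInf_spec_le n _ (cauchyW_herm n lam b)
  set m := sInf (spectrum ℝ (cauchyW n lam b)) with hm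
  by_cases h0 : ∃ i, b i = 0
  · obtain ⟨i, hi⟩ := h0
    have hm0 : m ≤ 0 := by
      have := hq (Pi.single i 1)
      rw [cauchyW_quad] at this
      have e : ∀ k, b k * (Pi.single i 1 : Fin n → ℝ) k = 0 := by
        intro k
        by_cases hk : k = i
        · subst hk; simp [hi]
        · simp [hk]
      simp only [e] at this
      have e2 : ∑ k, (Pi.single i 1 : Fin n → ℝ) k ^ 2 = 1 := by
        rw [Finset.sum_eq_single i] <;> simp +contextual
      rw [e2] at this
      simpa using this
    exact ⟨by linarith, fun h => by linarith⟩
  · push Not at h0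
    have h1 := hq (fun i => (-1 : ℝ) ^ (i : ℕ) * cU n lam i / b i)
    rw [cauchyW_quad] at h1
    have e1 : ∀ i, b i * ((-1 : ℝ) ^ (i : ℕ) * cU n lam i / b i) =
        (-1 : ℝ) ^ (i : ℕ) * cU n lam i := fun i => by
      have := h0 i
      field_simp
    simp only [e1] at h1
    have e2 : ∑ i : Fin n, ∑ j : Fin n, ((-1 : ℝ) ^ (i : ℕ) * cU n lam i) * ((-1 : ℝ) ^ (j : ℕ) * cU n lam j) *
        (1 / (lam i + lam j)) = s := by
      rw [hs]
      refine Finset.sum_congr rfl fun i _ => ?_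
      have := cauchy_apply n lam hpos hmono (fun _ => 1) i
      simp only [mul_one] at this
      calc _ = ((-1 : ℝ) ^ (i : ℕ) * cU n lam i) *
            ∑ j, (1 / (lam i + lam j)) * ((-1 : ℝ) ^ (j : ℕ) * ∑ k, cM n lam j k) := by
            rw [Finset.mul_sum]
            refine Finset.sum_congr rfl fun j _ => ?_
            simp only [cU]; ring
        _ = cU n lam i := by
            rw [this]
            linear_combination cU n lam i * sgn_mul_self i
    have e3 : ∑ i : Fin n, ((-1 : ℝ) ^ (i : ℕ) * cU n lam i / b i) ^ 2 =
        ∑ i, (cU n lam i / b i) ^ 2 := by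
      refine Finset.sum_congr rfl fun i _ => ?_
      linear_combination (cU n lam i / b i) ^ 2 * sgn_mul_self i
    rw [e2, e3] at h1
    set Q := ∑ i, (cU n lam i / b i) ^ 2 with hQ
    have e4 : ∑ i, (cU n lam i / b i - s * b i) ^ 2 = Q - s ^ 2 := by
      have : ∀ i, (cU n lam i / b i - s * b i) ^ 2 =
          (cU n lam i / b i) ^ 2 - 2 * s * cU n lam i + s ^ 2 * b i ^ 2 := by
        intro i
        have := h0 i
        field_simp
        ring
      simp_rw [this]
      rw [Finset.sum_add_distrib, Finset.sum_sub_distrib, ← Finset.mul_sum, ← Finset.mul_sum, hb,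
        ← hs]
      ring
    have hnn : ∀ i ∈ Finset.univ, 0 ≤ (cU n lam i / b i - s * b i) ^ 2 := fun i _ => sq_nonneg _
    have h5 : 0 ≤ Q - s ^ 2 := e4 ▸ Finset.sum_nonneg hnn
    have hss : 1 / s * s ^ 2 = s := by field_simp
    constructor
    · by_contra hc
      push Not at hc
      have a1 : 1 / s * s ^ 2 < m * s ^ 2 := mul_lt_mul_of_pos_right hc (by positivity)
      have a2 : m * s ^ 2 ≤ m * Q := mul_le_mul_of_nonneg_left (by linarith) (by linarith)
      linarith
    · intro hc i
      have a1 : 1 / s * Q ≤ m * Q := mul_le_mul_of_nonneg_right hc (by nlinarith)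
      have a2 : Q ≤ s ^ 2 := by
        have : 1 / s * Q ≤ 1 / s * s ^ 2 := by linarith
        exact le_of_mul_le_mul_left this hinv
      have a3 : ∑ i, (cU n lam i / b i - s * b i) ^ 2 = 0 := by linarith
      have a4 := (Finset.sum_eq_zero_iff_of_nonneg hnn).mp a3 i (Finset.mem_univ i)
      have a5 : cU n lam i / b i - s * b i = 0 := by simpa using a4
      have := h0 i
      field_simp at a5
      field_simp
      linarith

theorem lower_bound (n : ℕ) (hn : 0 < n) (lam : Fin n → ℝ)
    (hpos : ∀ i, 0 < lam i) (hmono : StrictMono lam) (b : Fin n → ℝ)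
    (hb : ∀ i, b i ^ 2 = cU n lam i / ∑ j, cU n lam j) :
    1 / ∑ j, cU n lam j ≤ sInf (spectrum ℝ (cauchyW n lam b)) := by
  refine le_sInf_spec n hn _ (cauchyW_herm n lam b) _ fun x => ?_
  rw [cauchyW_quad]
  set s := ∑ j, cU n lam j with hs
  have hspos : 0 < s := Finset.sum_pos (fun j _ => cU_pos n lam hpos hmono j)
    ⟨⟨0, hn⟩, Finset.mem_univ _⟩
  have hu : ∀ i, 0 < cU n lam i := cU_pos n lam hpos hmono
  set z : Fin n → ℝ := fun i => b i * x i with hz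
  -- `w` is the sign-twisted version of `z / u`
  set w : Fin n → ℝ := fun i => (-1 : ℝ) ^ (i : ℕ) * (z i / cU n lam i) with hw
  set g : Fin n → ℝ := fun j => (-1 : ℝ) ^ (j : ℕ) * ∑ k, cM n lam j k * w k with hg
  have hgw : ∀ i, ∑ j, (1 / (lam i + lam j)) * g j = z i / cU n lam i := by
    intro i
    have := cauchy_apply n lam hpos hmono w i
    rw [this, hw]
    linear_combination (z i / cU n lam i) * sgn_mul_self i
  have hlhs : 1 / s * ∑ i, x i ^ 2 = ∑ i, z i * (z i / cU n lam i) := by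
    rw [Finset.mul_sum]
    refine Finset.sum_congr rfl fun i _ => ?_
    have h1 := hb i
    have := (hu i).ne'
    have : z i * (z i / cU n lam i) = b i ^ 2 * x i ^ 2 / cU n lam i := by
      simp only [hz]; ring
    rw [this, h1]
    field_simp
  have hps := cauchy_quad_nonneg n lam hpos (fun i => z i - g i)
  have hexp : ∑ i, ∑ j, (z i - g i) * (z j - g j) * (1 / (lam i + lam j)) =
      ∑ i, ∑ j, z i * z j * (1 / (lam i + lam j)) - 2 * ∑ i, z i * (z i / cU n lam i)
       + ∑ i, g i * (z i / cU n lam i) := by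
    have e1 : ∑ i, z i * (z i / cU n lam i) = ∑ i, ∑ j, z i * g j * (1 / (lam i + lam j)) := by
      refine Finset.sum_congr rfl fun i _ => ?_
      rw [← hgw i, Finset.mul_sum]
      exact Finset.sum_congr rfl fun j _ => by ring
    have e2 : ∑ i, z i * (z i / cU n lam i) = ∑ i, ∑ j, g i * z j * (1 / (lam i + lam j)) := by
      rw [e1, Finset.sum_comm]
      refine Finset.sum_congr rfl fun i _ => Finset.sum_congr rfl fun j _ => ?_
      rw [add_comm (lam j)]; ring
    have e3 : ∑ i, g i * (z i / cU n lam i) = ∑ i, ∑ j, g i * g j * (1 / (lam i + lam j)) := by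
      refine Finset.sum_congr rfl fun i _ => ?_
      rw [← hgw i, Finset.mul_sum]
      exact Finset.sum_congr rfl fun j _ => by ring
    rw [two_mul]
    nth_rewrite 1 [e1]
    rw [e2, e3]
    simp only [← Finset.sum_add_distrib, ← Finset.sum_sub_distrib]
    refine Finset.sum_congr rfl fun i _ => Finset.sum_congr rfl fun j _ => ?_
    ring
  have hgz : ∑ i, g i * (z i / cU n lam i) = ∑ i, ∑ k, cM n lam i k * (w i * w k) := by
    refine Finset.sum_congr rfl fun i _ => ?_
    simp only [hg]
    rw [Finset.mul_sum, Finset.sum_mul]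
    refine Finset.sum_congr rfl fun k _ => ?_
    simp only [hw]
    ring
  have hzu : ∑ i, z i * (z i / cU n lam i) = ∑ i, ∑ k, cM n lam i k * w i ^ 2 := by
    refine Finset.sum_congr rfl fun i _ => ?_
    rw [← Finset.sum_mul]
    change _ = cU n lam i * w i ^ 2
    have := (hu i).ne'
    have e : w i ^ 2 = (z i / cU n lam i) ^ 2 := by
      simp only [hw]
      linear_combination (z i / cU n lam i) ^ 2 * sgn_mul_self i
    rw [e]
    field_simp
  have hzu2 : ∑ i, z i * (z i / cU n lam i) = ∑ i, ∑ k, cM n lam i k * w k ^ 2 := by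
    rw [hzu, Finset.sum_comm]
    refine Finset.sum_congr rfl fun i _ => Finset.sum_congr rfl fun k _ => ?_
    rw [cM_symm]
  have hfin : 0 ≤ ∑ i, ∑ k, cM n lam i k * (w i - w k) ^ 2 :=
    Finset.sum_nonneg fun i _ => Finset.sum_nonneg fun k _ =>
      mul_nonneg (cM_pos n lam hpos hmono i k).le (sq_nonneg _)
  have hfe : ∑ i, ∑ k, cM n lam i k * (w i - w k) ^ 2 =
      ∑ i, ∑ k, cM n lam i k * w i ^ 2 + ∑ i, ∑ k, cM n lam i k * w k ^ 2
        - 2 * ∑ i, ∑ k, cM n lam i k * (w i * w k) := by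
    simp only [Finset.mul_sum, ← Finset.sum_add_distrib, ← Finset.sum_sub_distrib]
    refine Finset.sum_congr rfl fun i _ => Finset.sum_congr rfl fun j _ => ?_
    ring
  rw [hfe, ← hzu, ← hzu2, ← hgz] at hfin
  rw [hexp] at hps
  rw [hlhs]
  linarith

/-- A unit vector `b` maximizes the smallest eigenvalue of `W(b)` over the unit
sphere iff `|bᵢ| = v*ᵢ` for all `i`, iff `b = σ v*` for a signature matrix `σ`;
in particular there are exactly `2^n` maximizers. -/
theorem maximizers_characterization (n : ℕ) (hn : 0 < n) (lam : Fin n → ℝ)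
    (hpos : ∀ i, 0 < lam i) (hmono : StrictMono lam) :
    (∀ b : Fin n → ℝ, ∑ i, b i ^ 2 = 1 →
      (((∀ b' : Fin n → ℝ, ∑ i, b' i ^ 2 = 1 →
          sInf (spectrum ℝ (cauchyW n lam b')) ≤
            sInf (spectrum ℝ (cauchyW n lam b))) ↔
        ∀ i, |b i| = vStar n lam i) ∧
      ((∀ b' : Fin n → ℝ, ∑ i, b' i ^ 2 = 1 →
          sInf (spectrum ℝ (cauchyW n lam b')) ≤
            sInf (spectrum ℝ (cauchyW n lam b))) ↔
        ∃ ε : Fin n → ℝ, (∀ i, ε i = 1 ∨ ε i = -1) ∧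
          b = fun i => ε i * vStar n lam i))) ∧
    Set.ncard
      {b : Fin n → ℝ | ∑ i, b i ^ 2 = 1 ∧
        ∀ b' : Fin n → ℝ, ∑ i, b' i ^ 2 = 1 →
          sInf (spectrum ℝ (cauchyW n lam b')) ≤
            sInf (spectrum ℝ (cauchyW n lam b))} = 2 ^ n := by
  set s := ∑ j, cU n lam j with hs
  have hspos : 0 < s := Finset.sum_pos (fun j _ => cU_pos n lam hpos hmono j)
    ⟨⟨0, hn⟩, Finset.mem_univ _⟩
  have hv : ∀ i, vStar n lam i = Real.sqrt (cU n lam i / s) := vStar_eq n lam hpos hmono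
  have hvp : ∀ i, 0 < vStar n lam i := fun i => by
    rw [hv]; exact Real.sqrt_pos.mpr (div_pos (cU_pos n lam hpos hmono i) hspos)
  have hv2 : ∀ i, vStar n lam i ^ 2 = cU n lam i / s := fun i => by
    rw [hv]; exact Real.sq_sqrt (div_pos (cU_pos n lam hpos hmono i) hspos).le
  have hvu : ∑ i, vStar n lam i ^ 2 = 1 := by
    simp_rw [hv2]
    rw [← Finset.sum_div, ← hs]
    exact div_self hspos.ne'
  have habs : ∀ b : Fin n → ℝ, (∀ i, |b i| = vStar n lam i) ↔ ∀ i, b i ^ 2 = cU n lam i / s := by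
    intro b
    refine forall_congr' fun i => ?_
    rw [← hv2, sq_eq_sq_iff_abs_eq_abs, abs_of_pos (hvp i)]
  have main : ∀ b : Fin n → ℝ, ∑ i, b i ^ 2 = 1 →
      ((∀ b' : Fin n → ℝ, ∑ i, b' i ^ 2 = 1 →
          sInf (spectrum ℝ (cauchyW n lam b')) ≤
            sInf (spectrum ℝ (cauchyW n lam b))) ↔
        ∀ i, |b i| = vStar n lam i) := by
    intro b hb
    rw [habs]
    constructor
    · intro h
      exact (upper_bound n hn lam hpos hmono b hb).2
        ((lower_bound n hn lam hpos hmono _ hv2).trans (h _ hvu))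
    · intro h b' hb'
      exact (upper_bound n hn lam hpos hmono b' hb').1.trans (lower_bound n hn lam hpos hmono b h)
  have hsgn : ∀ b : Fin n → ℝ, (∀ i, |b i| = vStar n lam i) ↔
      ∃ ε : Fin n → ℝ, (∀ i, ε i = 1 ∨ ε i = -1) ∧ b = fun i => ε i * vStar n lam i := by
    intro b
    constructor
    · intro h
      refine ⟨fun i => if 0 ≤ b i then 1 else -1, fun i => ?_, ?_⟩
      · by_cases h' : 0 ≤ b i <;> simp [h']
      · ext i
        rw [← h i]
        by_cases h' : 0 ≤ b i
        · simp [h', abs_of_nonneg h']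
        · simp [h', abs_of_neg (not_le.mp h')]
    · rintro ⟨ε, hε, rfl⟩ i
      rcases hε i with h | h <;> simp [h, abs_of_pos (hvp i)]
  refine ⟨fun b hb => ⟨main b hb, (main b hb).trans (hsgn b)⟩, ?_⟩
  have hset : {b : Fin n → ℝ | ∑ i, b i ^ 2 = 1 ∧
        ∀ b' : Fin n → ℝ, ∑ i, b' i ^ 2 = 1 →
          sInf (spectrum ℝ (cauchyW n lam b')) ≤
            sInf (spectrum ℝ (cauchyW n lam b))} =
      ↑(Fintype.piFinset fun i => ({vStar n lam i, -vStar n lam i} : Finset ℝ)) := by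
    ext b
    simp only [Set.mem_setOf_eq, Finset.mem_coe, Fintype.mem_piFinset, Finset.mem_insert,
      Finset.mem_singleton]
    have h1 : (∀ i, b i = vStar n lam i ∨ b i = -vStar n lam i) ↔
        ∀ i, |b i| = vStar n lam i :=
      forall_congr' fun i => (abs_eq (hvp i).le).symm
    rw [h1]
    constructor
    · rintro ⟨hb, h⟩
      exact (main b hb).mp h
    · intro h
      have hb : ∑ i, b i ^ 2 = 1 := by
        rw [← hvu]
        exact Finset.sum_congr rfl fun i _ => by rw [← h i, sq_abs]
      exact ⟨hb, (main b hb).mpr h⟩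
  rw [hset, Set.ncard_coe_finset, Fintype.card_piFinset]
  have : ∀ i, ({vStar n lam i, -vStar n lam i} : Finset ℝ).card = 2 := fun i =>
    Finset.card_pair (by linarith [hvp i])
  simp [this]
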